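/- Let d ≥ 1 and let n : ℝ^d → ℝ be a C^∞ ℤ^d-periodic function with n(x) > 0 for every x. Then ∫_{T^d} n ∇( Δ√n / √n ) · ∇(log n) dx = − (1/2) ∫_{T^d} n Σ_{i,j} ( ∂_i ∂_j (log n) )² dx; that is, the quantum term tested against ∇ log n produces minus one half of ∫_{T^d} n |∇² log n|² dx. -/

import Mathlib

open MeasureTheory

/-- The `i`-th partial derivative of `f : ℝ^d → ℝ`. -/
noncomputable def pd {d : ℕ} (i : Fin d) (f : (Fin d → ℝ) → ℝ) (x : Fin d → ℝ) : ℝ :=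
  fderiv ℝ f x (Pi.single i 1)

abbrev Sm {d : ℕ} (f : (Fin d → ℝ) → ℝ) : Prop := ContDiff ℝ (⊤ : ℕ∞) f

theorem Sm.da {d : ℕ} {f : (Fin d → ℝ) → ℝ} (hf : Sm f) (x : Fin d → ℝ) :
    DifferentiableAt ℝ f x :=
  (hf.differentiable (by simp)) x

theorem pd_smooth {d : ℕ} (i : Fin d) {f : (Fin d → ℝ) → ℝ} (hf : Sm f) : Sm (pd i f) := by
  have h : ContDiff ℝ (⊤ : ℕ∞) (fderiv ℝ f) := hf.fderiv_right (by simp)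
  exact h.clm_apply contDiff_const

theorem pd_add' {d : ℕ} (i : Fin d) {f g : (Fin d → ℝ) → ℝ} (hf : Sm f) (hg : Sm g)
    (x : Fin d → ℝ) : pd i (fun y => f y + g y) x = pd i f x + pd i g x := by
  unfold pd
  rw [fderiv_fun_add (hf.da x) (hg.da x)]
  rfl

theorem pd_mul' {d : ℕ} (i : Fin d) {f g : (Fin d → ℝ) → ℝ} (hf : Sm f) (hg : Sm g)
    (x : Fin d → ℝ) : pd i (fun y => f y * g y) x = pd i f x * g x + f x * pd i g x := by
  unfold pd
  rw [fderiv_fun_mul (hf.da x) (hg.da x)]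
  simp
  ring

theorem pd_cmul {d : ℕ} (i : Fin d) {f : (Fin d → ℝ) → ℝ} (hf : Sm f) (c : ℝ)
    (x : Fin d → ℝ) : pd i (fun y => c * f y) x = c * pd i f x := by
  unfold pd
  rw [fderiv_const_mul (hf.da x)]
  simp

theorem pd_sum' {d : ℕ} (i : Fin d) {f : Fin d → (Fin d → ℝ) → ℝ} (hf : ∀ j, Sm (f j))
    (x : Fin d → ℝ) : pd i (fun y => ∑ j, f j y) x = ∑ j, pd i (f j) x := by
  unfold pd
  rw [fderiv_fun_sum (fun j _ => (hf j).da x)]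
  simp

theorem pd_exp' {d : ℕ} (i : Fin d) {f : (Fin d → ℝ) → ℝ} (hf : Sm f)
    (x : Fin d → ℝ) : pd i (fun y => Real.exp (f y)) x = Real.exp (f x) * pd i f x := by
  unfold pd
  rw [fderiv_exp (hf.da x)]
  simp

theorem pd_comm {d : ℕ} (i j : Fin d) {f : (Fin d → ℝ) → ℝ} (hf : Sm f)
    (x : Fin d → ℝ) : pd i (pd j f) x = pd j (pd i f) x := by
  have h : ContDiff ℝ (⊤ : ℕ∞) (fderiv ℝ f) := hf.fderiv_right (by simp)
  have hd : DifferentiableAt ℝ (fderiv ℝ f) x := (h.differentiable (by simp)) x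
  have key : ∀ a b : Fin d, pd a (pd b f) x
      = fderiv ℝ (fderiv ℝ f) x (Pi.single a 1) (Pi.single b 1) := by
    intro a b
    unfold pd
    rw [fderiv_clm_apply hd (differentiableAt_const _)]
    simp
  rw [key, key]
  have hs : IsSymmSndFDerivAt ℝ f x := by
    apply ContDiffAt.isSymmSndFDerivAt (n := (⊤ : ℕ∞)) hf.contDiffAt
    simp only [minSmoothness_of_isRCLikeNormedField]
    exact WithTop.coe_le_coe.2 le_top
  exact hs _ _

def Per {d : ℕ} (f : (Fin d → ℝ) → ℝ) : Prop :=
  ∀ (z : Fin d → ℤ) (x : Fin d → ℝ), f (x + fun i => (z i : ℝ)) = f x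

theorem pd_per {d : ℕ} (i : Fin d) {f : (Fin d → ℝ) → ℝ} (hf : Per f) : Per (pd i f) := by
  intro z x
  unfold pd
  rw [← fderiv_comp_add_right]
  congr 2
  funext y
  exact hf z y

theorem int_div {d : ℕ} (hd : 1 ≤ d) (G : Fin d → (Fin d → ℝ) → ℝ) (hG : ∀ j, Sm (G j))
    (hp : ∀ j, Per (G j)) :
    ∫ x in Set.Icc (0 : Fin d → ℝ) 1, ∑ j, pd j (G j) x = 0 := by
  obtain ⟨m, rfl⟩ : ∃ m, d = m + 1 := ⟨d - 1, by omega⟩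
  have h := integral_divergence_of_hasFDerivAt_off_countable' (0 : Fin (m+1) → ℝ) 1
    (fun _ => zero_le_one) G (fun j => fderiv ℝ (G j)) ∅ Set.countable_empty
    (fun j => (hG j).continuous.continuousOn)
    (fun x _ j => ((hG j).da x).hasFDerivAt) ?_
  · unfold pd
    rw [h]
    apply Finset.sum_eq_zero
    intro j _
    rw [sub_eq_zero]
    congr 1
    funext y
    have := hp j (Pi.single j 1) (j.insertNth ((0 : Fin (m+1) → ℝ) j) y)
    rw [← this]
    congr 1
    funext k
    refine Fin.succAboveCases j ?_ (fun l => ?_) k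
    · simp
    · simp
  · apply Continuous.integrableOn_Icc
    exact continuous_finsetSum _ fun j _ => (pd_smooth j (hG j)).continuous

theorem quantum_term_against_grad_log (d : ℕ) (hd : 1 ≤ d) (n : (Fin d → ℝ) → ℝ)
    (hn : ContDiff ℝ (⊤ : ℕ∞) n) (hpos : ∀ x, 0 < n x)
    (hnper : ∀ (z : Fin d → ℤ) (x : Fin d → ℝ), n (x + fun i => (z i : ℝ)) = n x) :
    (∫ x in Set.Icc (0 : Fin d → ℝ) 1, ∑ i : Fin d,
        n x * pd i (fun y =>
          (∑ j : Fin d, pd j (pd j (fun z => Real.sqrt (n z))) y) / Real.sqrt (n y)) x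
          * pd i (fun y => Real.log (n y)) x)
      = -(1/2) * ∫ x in Set.Icc (0 : Fin d → ℝ) 1,
          n x * ∑ i : Fin d, ∑ j : Fin d,
            (pd i (pd j (fun y => Real.log (n y))) x) ^ 2 := by
  obtain ⟨u, hu⟩ : ∃ u : (Fin d → ℝ) → ℝ, u = fun y => Real.log (n y) := ⟨_, rfl⟩
  have hus : Sm u := by
    rw [hu]; exact hn.log (fun x => (hpos x).ne')
  have hup : Per u := by
    intro z x; simp only [hu, hnper]
  have hne : n = fun y => Real.exp (u y) := by
    funext y; simp [hu, Real.exp_log (hpos y)]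
  have hsq : (fun z => Real.sqrt (n z)) = fun y => Real.exp ((1/2) * u y) := by
    funext y
    rw [hne, Real.sqrt_eq_iff_mul_self_eq (Real.exp_pos _).le (Real.exp_pos _).le, ← Real.exp_add]
    ring_nf
  have hsq' : ∀ z, Real.sqrt (n z) = Real.exp ((1/2) * u z) := fun z => congrFun hsq z
  have hhalf : Sm (fun y => (1/2) * u y) := contDiff_const.mul hus
  have hs : Sm (fun y => Real.exp ((1/2) * u y)) := hhalf.exp
  have h1 : ∀ j, Sm (pd j u) := fun j => pd_smooth j hus
  have h2 : ∀ i j, Sm (pd i (pd j u)) := fun i j => pd_smooth i (h1 j)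
  have hQ : (fun y =>
      (∑ j : Fin d, pd j (pd j (fun z => Real.sqrt (n z))) y) / Real.sqrt (n y))
      = fun y => ∑ j : Fin d, ((1/2) * pd j (pd j u) y + (1/4) * (pd j u y * pd j u y)) := by
    have hp1 : ∀ j, pd j (fun y => Real.exp ((1/2) * u y))
        = fun y => Real.exp ((1/2) * u y) * ((1/2) * pd j u y) := by
      intro j; funext y
      rw [pd_exp' j hhalf, pd_cmul j hus]
    funext y
    rw [hsq, hsq', Finset.sum_div]
    refine Finset.sum_congr rfl fun j _ => ?_
    rw [hp1, pd_mul' j hs (contDiff_const.mul (h1 j)), hp1, pd_cmul j (h1 j)]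
    have := Real.exp_pos ((1/2) * u y)
    field_simp
    ring
  rw [hQ, ← hu]
  have hpn : ∀ j x, pd j n x = n x * pd j u x := by
    intro j x
    rw [hne]; exact pd_exp' j hus x
  let G : Fin d → (Fin d → ℝ) → ℝ := fun j y => ∑ i, n y * (pd i (pd j u) y * pd i u y)
  have hGi : ∀ i j, Sm (fun y => n y * (pd i (pd j u) y * pd i u y)) :=
    fun i j => hn.mul ((h2 i j).mul (h1 i))
  have hG : ∀ j, Sm (G j) := fun j => ContDiff.sum fun i _ => hGi i j
  have hGp : ∀ j, Per (G j) := by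
    intro j z x
    simp only [G]
    refine Finset.sum_congr rfl fun i _ => ?_
    rw [hnper, pd_per i (pd_per j hup) z x, pd_per i hup z x]
  have hdiv := int_div hd G hG hGp
  have hpt : ∀ x, (∑ i : Fin d, n x * pd i (fun y =>
      ∑ j : Fin d, ((1/2) * pd j (pd j u) y + (1/4) * (pd j u y * pd j u y))) x * pd i u x)
      = (1/2) * (∑ j, pd j (G j) x)
        + (-(1/2)) * (n x * ∑ i : Fin d, ∑ j : Fin d, (pd i (pd j u) x) ^ 2) := by
    intro x
    have hA : ∀ j, pd j (G j) x = ∑ i, (n x * pd j u x * (pd i (pd j u) x * pd i u x)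
        + n x * (pd i (pd j (pd j u)) x * pd i u x + pd i (pd j u) x ^ 2)) := by
      intro j
      simp only [G]
      rw [pd_sum' j (fun i => hGi i j)]
      refine Finset.sum_congr rfl fun i _ => ?_
      rw [pd_mul' j hn ((h2 i j).mul (h1 i)), pd_mul' j (h2 i j) (h1 i), hpn,
        pd_comm j i (h1 j), pd_comm j i hus]
      ring
    have hB : ∀ i, pd i (fun y =>
        ∑ j : Fin d, ((1/2) * pd j (pd j u) y + (1/4) * (pd j u y * pd j u y))) x
        = ∑ j, ((1/2) * pd i (pd j (pd j u)) x + (1/2) * (pd j u x * pd i (pd j u) x)) := by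
      intro i
      have ha : ∀ j, Sm (fun y => (1/2) * pd j (pd j u) y) := fun j => contDiff_const.mul (h2 j j)
      have hb : ∀ j, Sm (fun y => pd j u y * pd j u y) := fun j => (h1 j).mul (h1 j)
      have hc : ∀ j, Sm (fun y => (1/4) * (pd j u y * pd j u y)) :=
        fun j => contDiff_const.mul (hb j)
      rw [pd_sum' i (fun j => (ha j).add (hc j))]
      refine Finset.sum_congr rfl fun j _ => ?_
      rw [pd_add' i (ha j) (hc j), pd_cmul i (h2 j j), pd_cmul i (hb j), pd_mul' i (h1 j) (h1 j)]
      ring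
    simp only [hA, hB]
    rw [Finset.sum_comm (f := fun j i => (n x * pd j u x * (pd i (pd j u) x * pd i u x)
        + n x * (pd i (pd j (pd j u)) x * pd i u x + pd i (pd j u) x ^ 2)))]
    simp only [Finset.mul_sum, Finset.sum_mul, ← Finset.sum_add_distrib]
    refine Finset.sum_congr rfl fun i _ => Finset.sum_congr rfl fun j _ => ?_
    ring
  simp only [hpt]
  rw [integral_add, integral_const_mul, integral_const_mul, hdiv]
  · simp
  · apply Continuous.integrableOn_Icc
    exact continuous_const.mul
      (continuous_finsetSum _ fun j _ => (pd_smooth j (hG j)).continuous)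
  · apply Continuous.integrableOn_Icc
    exact continuous_const.mul (hn.continuous.mul
      (continuous_finsetSum _ fun i _ => continuous_finsetSum _ fun j _ =>
        (h2 i j).continuous.pow 2))
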